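/- For every integer k ≥ 1 and every θ ∈ [0, π], |g(θ) − g_k(θ)| ≤ J(θ)/(π (k+1)). -/

import Mathlib

open Real

/-- The step function on `[0, π]`: `1` on `(β, α)`, `1/2` at `α` and `β`, `0` elsewhere. -/
noncomputable def stepG (α β θ : ℝ) : ℝ :=
  if θ = α ∨ θ = β then 1 / 2 else if θ ∈ Set.Ioo β α then 1 else 0

/-- Fourier coefficients of the step function. -/
noncomputable def fourierC (α β : ℝ) : ℕ → ℝ
  | 0 => (α - β) / Real.pi
  | (j + 1) => (2 / Real.pi) * (Real.sin ((j + 1) * α) - Real.sin ((j + 1) * β)) / (j + 1)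

/-- The `k`-th partial sum `g_k(θ) = ∑_{j=0}^k c_j cos(jθ)`. -/
noncomputable def stepGk (α β : ℝ) (k : ℕ) (θ : ℝ) : ℝ :=
  ∑ j ∈ Finset.range (k + 1), fourierC α β j * Real.cos (j * θ)

/-- The quantity `J(θ)` controlling the pointwise Fourier error. -/
noncomputable def Jfun (α β θ : ℝ) : ℝ :=
  if θ = α then
    1 / |Real.sin α| + 1 / |Real.sin ((α + β) / 2)| + 1 / |Real.sin ((α - β) / 2)|
  else if θ = β then
    1 / |Real.sin β| + 1 / |Real.sin ((α + β) / 2)| + 1 / |Real.sin ((α - β) / 2)|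
  else
    1 / |Real.sin ((θ + α) / 2)| + 1 / |Real.sin ((θ - α) / 2)|
      + 1 / |Real.sin ((θ + β) / 2)| + 1 / |Real.sin ((θ - β) / 2)|

noncomputable def auxS (k : ℕ) (x : ℝ) : ℝ :=
  ∑ j ∈ Finset.range k, Real.sin ((j + 1) * x) / (j + 1)

lemma auxS_neg (k : ℕ) (x : ℝ) : auxS k (-x) = - auxS k x := by
  unfold auxS
  rw [← Finset.sum_neg_distrib]
  refine Finset.sum_congr rfl fun j _ => ?_
  rw [mul_neg, Real.sin_neg, neg_div]

lemma auxS_zero (k : ℕ) : auxS k 0 = 0 := by simp [auxS]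

lemma auxS_refl (k : ℕ) (x : ℝ) : auxS k (2 * π - x) = - auxS k x := by
  unfold auxS
  rw [← Finset.sum_neg_distrib]
  refine Finset.sum_congr rfl fun j _ => ?_
  have : ((j:ℝ) + 1) * (2 * π - x) = ((j + 1 : ℕ) : ℝ) * (2 * π) - (j + 1) * x := by
    push_cast; ring
  rw [this, Real.sin_nat_mul_two_pi_sub, neg_div]

lemma auxS_pi (k : ℕ) : auxS k π = 0 := by
  have := auxS_refl k π
  rw [show 2 * π - π = π by ring] at this
  linarith

lemma dirichlet (k : ℕ) (x : ℝ) :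
    2 * Real.sin (x / 2) * (1 / 2 + ∑ j ∈ Finset.range k, Real.cos ((j + 1) * x))
      = Real.sin ((k + 1 / 2) * x) := by
  induction k with
  | zero =>
    have : ((0:ℕ) + 1 / 2 : ℝ) * x = x / 2 := by push_cast; ring
    rw [this]; simp; ring
  | succ k ih =>
    rw [Finset.sum_range_succ, ← add_assoc, mul_add, ih]
    push_cast
    have h1 : ((k:ℝ) + 1 / 2) * x = (k + 1) * x - x / 2 := by ring
    have h2 : ((k:ℝ) + 1 + 1 / 2) * x = (k + 1) * x + x / 2 := by ring
    rw [h1, h2, Real.sin_sub, Real.sin_add]; ring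

lemma auxS_deriv (k : ℕ) (x : ℝ) :
    HasDerivAt (auxS k) (∑ j ∈ Finset.range k, Real.cos ((j + 1) * x)) x := by
  unfold auxS
  refine HasDerivAt.fun_sum fun j _ => ?_
  have h := (((hasDerivAt_id x).const_mul ((j:ℝ) + 1)).sin).div_const ((j:ℝ) + 1)
  have hj : (j:ℝ) + 1 ≠ 0 := by positivity
  refine h.congr_deriv ?_
  simp only [id, mul_one]
  rw [mul_div_assoc, div_self hj, mul_one]

lemma aux_deriv (k : ℕ) (c x : ℝ) (hx : Real.sin (x / 2) ≠ 0) :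
    HasDerivAt (fun t => (π - t) / 2 - auxS k t
        - Real.cos ((k + 1 / 2) * t) / ((2 * k + 1) * Real.sin (t / 2))
        + c / ((2 * k + 1) * Real.sin (t / 2)))
      ((Real.cos ((k + 1 / 2) * x) - c) * Real.cos (x / 2)
        / (2 * (2 * k + 1) * Real.sin (x / 2) ^ 2)) x := by
  have hk : (2 * (k:ℝ) + 1) ≠ 0 := by positivity
  have h1 := ((hasDerivAt_id x).const_sub π).div_const 2
  have h2 := auxS_deriv k x
  have h3 := ((hasDerivAt_id x).const_mul ((k:ℝ) + 1 / 2)).cos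
  have h4 := (((hasDerivAt_id x).div_const 2).sin).const_mul (2 * (k:ℝ) + 1)
  have h5 := h3.fun_div h4 (mul_ne_zero hk hx)
  have h6 := (hasDerivAt_const x c).fun_div h4 (mul_ne_zero hk hx)
  have h := ((h1.sub h2).sub h5).add h6
  refine HasDerivAt.congr_deriv h ?_
  have hd := dirichlet k x
  have hd' : ∑ j ∈ Finset.range k, Real.cos ((j + 1) * x)
      = Real.sin ((k + 1 / 2) * x) / (2 * Real.sin (x / 2)) - 1 / 2 := by
    rw [← hd, mul_div_cancel_left₀ _ (mul_ne_zero two_ne_zero hx)]; ring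
  rw [hd']
  simp only [id]
  field_simp
  ring

lemma crude (k : ℕ) (x : ℝ) (hx : 0 < x) (hxp : x ≤ π) :
    |(π - x) / 2 - auxS k x| ≤ 2 / ((2 * k + 1) * Real.sin (x / 2)) := by
  have hs : ∀ t ∈ Set.Icc x π, 0 < Real.sin (t / 2) := fun t ht =>
    Real.sin_pos_of_pos_of_lt_pi (by linarith [ht.1]) (by linarith [ht.2])
  have hc : ∀ t ∈ Set.Icc x π, 0 ≤ Real.cos (t / 2) := fun t ht =>
    Real.cos_nonneg_of_mem_Icc ⟨by linarith [ht.1], by linarith [ht.2]⟩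
  have hkp : (0:ℝ) < 2 * k + 1 := by positivity
  have hcp : Real.cos ((k + 1 / 2) * π) = 0 := by
    rw [Real.cos_eq_zero_iff]; exact ⟨k, by push_cast; ring⟩
  have anti : AntitoneOn (fun t => (π - t) / 2 - auxS k t
        - Real.cos ((k + 1 / 2) * t) / ((2 * k + 1) * Real.sin (t / 2))
        + 1 / ((2 * k + 1) * Real.sin (t / 2))) (Set.Icc x π) := by
    refine antitoneOn_of_hasDerivWithinAt_nonpos (convex_Icc _ _) (fun t ht =>
      (aux_deriv k 1 t (hs t ht).ne').continuousAt.continuousWithinAt) (fun t ht =>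
      (aux_deriv k 1 t (hs t (interior_subset ht)).ne').hasDerivWithinAt) (fun t ht => ?_)
    have ht' := interior_subset ht
    apply div_nonpos_of_nonpos_of_nonneg _ (by positivity)
    exact mul_nonpos_of_nonpos_of_nonneg (by linarith [Real.cos_le_one ((k + 1 / 2) * t)]) (hc t ht')
  have mono : MonotoneOn (fun t => (π - t) / 2 - auxS k t
        - Real.cos ((k + 1 / 2) * t) / ((2 * k + 1) * Real.sin (t / 2))
        + (-1) / ((2 * k + 1) * Real.sin (t / 2))) (Set.Icc x π) := by
    refine monotoneOn_of_hasDerivWithinAt_nonneg (convex_Icc _ _) (fun t ht =>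
      (aux_deriv k (-1) t (hs t ht).ne').continuousAt.continuousWithinAt) (fun t ht =>
      (aux_deriv k (-1) t (hs t (interior_subset ht)).ne').hasDerivWithinAt) (fun t ht => ?_)
    have ht' := interior_subset ht
    apply div_nonneg _ (by positivity)
    exact mul_nonneg (by linarith [Real.neg_one_le_cos ((k + 1 / 2) * t)]) (hc t ht')
  have m1 : x ∈ Set.Icc x π := ⟨le_rfl, hxp⟩
  have m2 : π ∈ Set.Icc x π := ⟨hxp, le_rfl⟩
  have a := anti m1 m2 hxp
  have b := mono m1 m2 hxp
  simp only [auxS_pi, hcp, Real.sin_pi_div_two] at a b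
  have hsx := hs x m1
  have hP : 0 < (2 * (k:ℝ) + 1) * Real.sin (x / 2) := by positivity
  have hq : 0 < 1 / ((2 * (k:ℝ) + 1) * 1) := by positivity
  have e1 : Real.cos ((k + 1 / 2) * x) / ((2 * k + 1) * Real.sin (x / 2))
      ≤ 1 / ((2 * k + 1) * Real.sin (x / 2)) := by
    gcongr; exact Real.cos_le_one _
  have e2 : (-1) / ((2 * k + 1) * Real.sin (x / 2))
      ≤ Real.cos ((k + 1 / 2) * x) / ((2 * k + 1) * Real.sin (x / 2)) := by
    gcongr; exact Real.neg_one_le_cos _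
  have e3 : 2 / ((2 * (k:ℝ) + 1) * Real.sin (x / 2)) = 1 / ((2 * k + 1) * Real.sin (x / 2))
    + 1 / ((2 * k + 1) * Real.sin (x / 2)) := by ring
  rw [neg_div] at e2
  simp only [neg_div] at b
  rw [abs_le, e3]
  generalize cos ((k + 1 / 2) * x) / ((2 * k + 1) * Real.sin (x / 2)) = C at *
  generalize 1 / ((2 * (k:ℝ) + 1) * Real.sin (x / 2)) = P at *
  generalize 1 / ((2 * (k:ℝ) + 1) * 1) = Q at *
  simp only [zero_div, sub_self] at a b
  constructor <;> linarith

lemma crude2 (k : ℕ) (x : ℝ) (hx : 0 < x) (hxp : x < 2 * π) :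
    |(π - x) / 2 - auxS k x| ≤ 2 / ((2 * k + 1) * Real.sin (x / 2)) := by
  rcases le_total x π with h | h
  · exact crude k x hx h
  · have := crude k (2 * π - x) (by linarith) (by linarith)
    rw [auxS_refl, show (2 * π - x) / 2 = π - x / 2 by ring, Real.sin_pi_sub,
      ← abs_neg] at this
    convert this using 2
    ring

lemma key (k : ℕ) (x : ℝ) (hx : 0 < x) (hxp : x < 2 * π) :
    |(π - x) / 2 - auxS k x| ≤ 1 / |Real.sin (x / 2)| / (k + 1) := by
  have hs : 0 < Real.sin (x / 2) :=
    Real.sin_pos_of_pos_of_lt_pi (by linarith) (by linarith)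
  rw [abs_of_pos hs]
  set s := Real.sin (x / 2) with hsdef
  let T : ℕ → ℝ := fun n => (π - x) / 2 - auxS n x
    - Real.cos ((n + 1 / 2) * x) / (2 * (n + 1) * s)
  have step : ∀ n, |T n - T (n + 1)| ≤ 1 / (2 * s) * (1 / (n + 1) - 1 / (n + 2)) := by
    intro n
    have hn1 : (n:ℝ) + 1 ≠ 0 := by positivity
    have hn2 : (n:ℝ) + 2 ≠ 0 := by positivity
    have e : T n - T (n + 1) = - Real.cos ((n + 1 + 1 / 2) * x)
        * (1 / (2 * s) * (1 / (n + 1) - 1 / (n + 2))) := by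
      simp only [T, auxS, Finset.sum_range_succ]
      push_cast
      have h1 : ((n:ℝ) + 1 / 2) * x = (n + 1) * x - x / 2 := by ring
      have h2 : ((n:ℝ) + 1 + 1 / 2) * x = (n + 1) * x + x / 2 := by ring
      have h3 : Real.sin ((n + 1) * x) = (Real.cos ((n + 1 / 2) * x)
          - Real.cos ((n + 1 + 1 / 2) * x)) / (2 * s) := by
        rw [h1, h2, Real.cos_sub, Real.cos_add, ← hsdef]; field_simp; ring
      rw [h3]
      have h4 : (n:ℝ) + 1 + 1 = n + 2 := by ring
      rw [h4]
      field_simp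
      ring
    have hpos : 0 ≤ 1 / (2 * s) * (1 / ((n:ℝ) + 1) - 1 / (n + 2)) := by
      apply mul_nonneg (by positivity)
      rw [sub_nonneg]
      gcongr
      norm_num
    rw [e, abs_mul, abs_neg, abs_of_nonneg hpos]
    exact mul_le_of_le_one_left hpos (Real.abs_cos_le_one _)
  have tele : ∀ m, |T k| ≤ |T (k + m)| + 1 / (2 * s) * (1 / (k + 1) - 1 / (k + m + 1)) := by
    intro m
    induction m with
    | zero => simp
    | succ m ih =>
      have h := step (k + m)
      have h2 := abs_sub_abs_le_abs_sub (T (k + m)) (T (k + m + 1))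
      rw [← add_assoc]
      push_cast at h ⊢
      have h4 : (k:ℝ) + (m + 1) + 1 = k + m + 2 := by ring
      rw [h4]
      linarith
  have bT : ∀ m, |T m| ≤ 2 / s * (1 / ((m:ℝ) + 1)) + 1 / s * (1 / ((m:ℝ) + 1)) := by
    intro m
    have h := crude2 m x hx hxp
    refine (abs_sub _ _).trans (add_le_add (h.trans ?_) ?_)
    · rw [div_mul_div_comm, mul_one, mul_comm s, ← hsdef]
      gcongr
      linarith [(Nat.cast_nonneg m : (0:ℝ) ≤ m)]
    · rw [abs_div, abs_of_pos (show 0 < 2 * ((m:ℝ) + 1) * s by positivity), div_mul_div_comm,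
        one_mul, mul_comm s]
      gcongr
      · exact Real.abs_cos_le_one _
      · linarith [(Nat.cast_nonneg m : (0:ℝ) ≤ m)]
  have lim : Filter.Tendsto (fun m : ℕ => 2 / s * (1 / ((m:ℝ) + 1)) + 1 / s * (1 / ((m:ℝ) + 1))
      + 1 / (2 * s) * (1 / ((k:ℝ) + 1))) Filter.atTop
      (nhds (2 / s * 0 + 1 / s * 0 + 1 / (2 * s) * (1 / ((k:ℝ) + 1)))) := by
    have h := tendsto_one_div_add_atTop_nhds_zero_nat (𝕜 := ℝ)
    exact ((h.const_mul _).add (h.const_mul _)).add_const _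
  have hT : |T k| ≤ 1 / (2 * s) * (1 / ((k:ℝ) + 1)) := by
    have := ge_of_tendsto' lim (b := |T k|) (fun m => by
      have h1 := tele m
      have h2 := bT (k + m)
      push_cast at h2
      have h3 : 1 / ((k:ℝ) + m + 1) ≤ 1 / ((m:ℝ) + 1) := by
        gcongr; linarith [(Nat.cast_nonneg k : (0:ℝ) ≤ k)]
      have h4 : 2 / s * (1 / ((k:ℝ) + m + 1)) ≤ 2 / s * (1 / ((m:ℝ) + 1)) := by gcongr
      have h5 : 1 / s * (1 / ((k:ℝ) + m + 1)) ≤ 1 / s * (1 / ((m:ℝ) + 1)) := by gcongr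
      have h6 : 0 ≤ 1 / (2 * s) * (1 / ((k:ℝ) + m + 1)) := by positivity
      rw [mul_sub] at h1
      linarith)
    simpa using this
  have hfin : |Real.cos ((k + 1 / 2) * x) / (2 * (k + 1) * s)| ≤ 1 / (2 * s) * (1 / ((k:ℝ) + 1)) := by
    rw [abs_div, abs_of_pos (show 0 < 2 * ((k:ℝ) + 1) * s by positivity), div_mul_div_comm,
      one_mul, show 2 * s * ((k:ℝ) + 1) = 2 * (k + 1) * s by ring]
    gcongr
    exact Real.abs_cos_le_one _
  have e : (π - x) / 2 - auxS k x = T k + Real.cos ((k + 1 / 2) * x) / (2 * (k + 1) * s) := by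
    simp [T]
  rw [e]
  refine (abs_add_le _ _).trans ((add_le_add hT hfin).trans (le_of_eq ?_))
  field_simp
  ring

lemma key_neg (k : ℕ) (x : ℝ) (hx : x < 0) (hxp : -(2 * π) < x) :
    |(-π - x) / 2 - auxS k x| ≤ 1 / |Real.sin (x / 2)| / (k + 1) := by
  have := key k (-x) (by linarith) (by linarith)
  rw [auxS_neg, neg_div, Real.sin_neg, abs_neg, ← abs_neg] at this
  convert this using 2
  ring

lemma gk_eq (α β : ℝ) (k : ℕ) (θ : ℝ) :
    stepGk α β k θ = (α - β + auxS k (θ + α) - auxS k (θ - α) - auxS k (θ + β)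
      + auxS k (θ - β)) / π := by
  unfold stepGk auxS
  rw [Finset.sum_range_succ', add_comm, eq_div_iff Real.pi_ne_zero, add_mul, Finset.sum_mul]
  simp only [fourierC, Nat.cast_zero, zero_mul, Real.cos_zero, mul_one]
  rw [div_mul_cancel₀ _ Real.pi_ne_zero]
  have hh : ∀ a b c d f g : ℝ, f = a - b - c + d → g + f = g + a - b - c + d := by
    intro a b c d f g h; rw [h]; ring
  apply hh
  rw [← Finset.sum_sub_distrib, ← Finset.sum_sub_distrib, ← Finset.sum_add_distrib]
  refine Finset.sum_congr rfl fun j _ => ?_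
  have hj : (j:ℝ) + 1 ≠ 0 := by positivity
  have hp := Real.pi_ne_zero
  push_cast
  rw [mul_add _ θ α, mul_sub _ θ α, mul_add _ θ β, mul_sub _ θ β, Real.sin_add, Real.sin_sub,
    Real.sin_add, Real.sin_sub]
  field_simp
  ring

theorem fourier_step_error_bound (α β : ℝ) (hβ : 0 < β) (hβα : β < α) (hα : α < Real.pi)
    (k : ℕ) (hk : 1 ≤ k) (θ : ℝ) (hθ : θ ∈ Set.Icc (0 : ℝ) Real.pi) :
    |stepG α β θ - stepGk α β k θ| ≤ Jfun α β θ / (Real.pi * (k + 1)) := by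
  obtain ⟨h0, hp⟩ := hθ
  have hpi := Real.pi_pos
  have e : stepG α β θ - stepGk α β k θ = (π * stepG α β θ - (α - β + auxS k (θ + α)
      - auxS k (θ - α) - auxS k (θ + β) + auxS k (θ - β))) / π := by
    rw [gk_eq, sub_div, mul_div_cancel_left₀ _ hpi.ne']
  rw [e, abs_div, abs_of_pos hpi, mul_comm π ((k:ℝ) + 1), ← div_div]
  refine div_le_div_of_nonneg_right ?_ hpi.le
  have A := abs_le.1 (key k (θ + α) (by linarith) (by linarith))
  have B := abs_le.1 (key k (θ + β) (by linarith) (by linarith))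
  unfold Jfun stepG
  by_cases h1 : θ = α
  · subst h1
    have C := abs_le.1 (key k (θ - β) (by linarith) (by linarith))
    rw [show (θ + θ) / 2 = θ by ring] at A
    simp only [true_or, if_true, sub_self, auxS_zero, add_div _ _ ((k:ℝ) + 1)]
    rw [abs_le]
    constructor <;> linarith [A.1, A.2, B.1, B.2, C.1, C.2]
  by_cases h2 : θ = β
  · subst h2
    have C := abs_le.1 (key_neg k (θ - α) (by linarith) (by linarith))
    rw [show (θ + θ) / 2 = θ by ring] at B
    rw [show (θ - α) / 2 = -((α - θ) / 2) by ring, Real.sin_neg, abs_neg] at C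
    rw [add_comm θ α] at A
    simp only [h1, or_true, if_true, if_false, sub_self, auxS_zero, add_div _ _ ((k:ℝ) + 1)]
    rw [add_comm θ α, abs_le]
    constructor <;> linarith [A.1, A.2, B.1, B.2, C.1, C.2]
  simp only [h1, h2, or_self, if_false, add_div _ _ ((k:ℝ) + 1)]
  rw [abs_le]
  rcases lt_or_gt_of_ne h1 with h3 | h3
  · have C := abs_le.1 (key_neg k (θ - α) (by linarith) (by linarith))
    rcases lt_or_gt_of_ne h2 with h4 | h4
    · have D := abs_le.1 (key_neg k (θ - β) (by linarith) (by linarith))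
      rw [if_neg (fun h => by linarith [h.1])]
      constructor <;> linarith [A.1, A.2, B.1, B.2, C.1, C.2, D.1, D.2]
    · have D := abs_le.1 (key k (θ - β) (by linarith) (by linarith))
      rw [if_pos ⟨h4, h3⟩]
      constructor <;> linarith [A.1, A.2, B.1, B.2, C.1, C.2, D.1, D.2]
  · have C := abs_le.1 (key k (θ - α) (by linarith) (by linarith))
    have D := abs_le.1 (key k (θ - β) (by linarith) (by linarith))
    rw [if_neg (fun h => by linarith [h.2])]
    constructor <;> linarith [A.1, A.2, B.1, B.2, C.1, C.2, D.1, D.2]
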